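/- arXiv:2104.00468 — 3 statements merged into one kernel-verified Lean document; each statement's English description precedes it below -/
import Mathlib

section
/- For a first-order language Σ, there exists a satisfiable Σ-sentence φ such that only finitely many complete theories of Σ contain φ if and only if Σ has only finitely many relation symbols (i.e., the total number of relation symbols of all arities is finite). In particular, if Σ has infinitely many relation symbols then every satisfiable Σ-sentence belongs to infinitely many complete theories of Σ. -/
open FirstOrder Language

/-!
Each theory determines the set of relation symbols that it declares to hold of every tuple.
A sentence `φ` constrains only the finitely many relation symbols occurring in it: in a model of
`φ` every other symbol may be reinterpreted at will as the full or the empty relation, so if there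
are infinitely many symbols, `φ` has infinitely many complete extensions. Conversely, a structure
with one element is determined up to isomorphism by the relation symbols that hold in it, so if
there are finitely many symbols, the sentence "there is only one element" has finitely many
complete extensions.
-/

section Coincidence

open FirstOrder.Language.Structure

variable {L : FirstOrder.Language} {α M N : Type*} {n : ℕ}

/-- The set of relation symbols occurring in a formula, paired with their arities. -/
def relationSymbols {n : ℕ} : L.BoundedFormula α n → Set (Σ k, L.Relations k)
  | .falsum => ∅
  | .equal _ _ => ∅
  | .rel r _ => {⟨_, r⟩}
  | .imp φ ψ => relationSymbols φ ∪ relationSymbols ψ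
  | .all φ => relationSymbols φ

theorem finite_relationSymbols (φ : L.BoundedFormula α n) : (relationSymbols φ).Finite := by
  induction φ with
  | falsum => exact Set.finite_empty
  | equal => exact Set.finite_empty
  | rel => exact Set.finite_singleton _
  | imp _ _ ihφ ihψ => exact ihφ.union ihψ
  | all _ ih => exact ih

variable [L.Structure M] [L.Structure N]

theorem realize_term_comp_of_map_funMap {g : M → N}
    (hg : ∀ {k} (f : L.Functions k) (xs : Fin k → M), g (funMap f xs) = funMap f (g ∘ xs))
    (t : L.Term α) (v : α → M) : t.realize (g ∘ v) = g (t.realize v) := by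
  induction t with
  | var => rfl
  | func f ts ih => rw [Term.realize_func, Term.realize_func, hg, funext ih]; rfl

theorem realize_boundedFormula_iff_of_agree_on_relationSymbols (e : M ≃ N)
    (hfun : ∀ {k} (f : L.Functions k) (xs : Fin k → M), e (funMap f xs) = funMap f (e ∘ xs))
    (φ : L.BoundedFormula α n)
    (hrel : ∀ p ∈ relationSymbols φ, ∀ xs : Fin p.1 → M, RelMap p.2 (e ∘ xs) ↔ RelMap p.2 xs)
    (v : α → M) (xs : Fin n → M) : φ.Realize (e ∘ v) (e ∘ xs) ↔ φ.Realize v xs := by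
  induction φ with
  | falsum => rfl
  | equal =>
    simp only [BoundedFormula.Realize, ← Sum.comp_elim, realize_term_comp_of_map_funMap hfun,
      e.apply_eq_iff_eq]
  | rel r ts =>
    simp only [BoundedFormula.Realize, ← Sum.comp_elim, realize_term_comp_of_map_funMap hfun]
    exact hrel ⟨_, r⟩ rfl _
  | imp φ ψ ihφ ihψ =>
    exact imp_congr (ihφ (fun p hp => hrel p (.inl hp)) xs) (ihψ (fun p hp => hrel p (.inr hp)) xs)
  | all φ ih =>
    simp only [BoundedFormula.Realize, ← e.forall_congr_right, ← Fin.comp_snoc, ih hrel]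

end Coincidence

section FullRelations

open FirstOrder.Language.Structure

variable {L : FirstOrder.Language} {M : Type*} [L.Structure M]

/-- The sentence `∀ x₁ … xₙ, r x₁ … xₙ`, asserting that the relation symbol `r` holds of every
tuple. -/
def fullSentence {n : ℕ} (r : L.Relations n) : L.Sentence :=
  (r.boundedFormula (&·) : L.BoundedFormula Empty n).alls

/-- The relation symbols that a theory explicitly declares to hold of every tuple. For a complete
theory these are the symbols interpreted as full relations in its models. -/
def fullRelations (T : L.Theory) : Set (Σ n, L.Relations n) :=
  {p | fullSentence p.2 ∈ T}

theorem realize_fullSentence {n : ℕ} {r : L.Relations n} :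
    M ⊨ fullSentence r ↔ ∀ xs : Fin n → M, RelMap r xs := by
  simp only [fullSentence, Sentence.Realize, BoundedFormula.realize_alls,
    BoundedFormula.realize_rel]
  rfl

theorem mem_fullRelations_completeTheory {p : Σ n, L.Relations n} :
    p ∈ fullRelations (L.completeTheory M) ↔ ∀ xs : Fin p.1 → M, RelMap p.2 xs :=
  realize_fullSentence

variable (M) in
theorem completeTheory_eq_of_isMaximal {T : L.Theory} (hT : T.IsMaximal) [M ⊨ T] [Nonempty M] :
    L.completeTheory M = T := by
  rw [← hT.isComplete.eq_complete_theory M]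
  exact Set.ext fun φ => (hT.mem_iff_models φ).symm

end FullRelations

section Override

open FirstOrder.Language.Structure

variable {L : FirstOrder.Language} {M : Type*}

/-- A copy of the structure `M` in which the relation symbols in `S` keep their interpretation,
while those outside `S` become full relations if they lie in `X` and empty ones otherwise. It is a
type synonym, so that it can carry a second structure on the same elements. -/
@[nolint unusedArguments]
def RelationOverride (_S _X : Set (Σ n, L.Relations n)) (M : Type*) : Type _ := M

variable {S X : Set (Σ n, L.Relations n)}

instance [Nonempty M] : Nonempty (RelationOverride S X M) := ‹Nonempty M›

variable [L.Structure M]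

open Classical in
instance : L.Structure (RelationOverride S X M) where
  funMap f xs := funMap (M := M) f xs
  RelMap {n} r xs := if ⟨n, r⟩ ∈ S then RelMap (M := M) r xs else ⟨n, r⟩ ∈ X

theorem relMap_relationOverride_of_mem {p : Σ n, L.Relations n} (hp : p ∈ S) (xs : Fin p.1 → M) :
    RelMap (M := RelationOverride S X M) p.2 xs ↔ RelMap p.2 xs :=
  iff_of_eq (if_pos hp)

theorem relMap_relationOverride_of_notMem {p : Σ n, L.Relations n} (hp : p ∉ S)
    (xs : Fin p.1 → RelationOverride S X M) : RelMap p.2 xs ↔ p ∈ X :=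
  iff_of_eq (if_neg hp)

theorem mem_fullRelations_relationOverride [Nonempty M] {p : Σ n, L.Relations n} (hp : p ∉ S) :
    p ∈ fullRelations (L.completeTheory (RelationOverride S X M)) ↔ p ∈ X := by
  simp only [mem_fullRelations_completeTheory, relMap_relationOverride_of_notMem hp, forall_const]

theorem realize_relationOverride_relationSymbols {φ : L.Sentence} :
    RelationOverride (relationSymbols φ) X M ⊨ φ ↔ M ⊨ φ := by
  let e : M ≃ RelationOverride (relationSymbols φ) X M := Equiv.refl M
  have hfun {k} (f : L.Functions k) (xs : Fin k → M) : e (funMap f xs) = funMap f (e ∘ xs) := rfl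
  have h := realize_boundedFormula_iff_of_agree_on_relationSymbols e hfun φ
    (fun _ hp => relMap_relationOverride_of_mem hp) default default
  rwa [Subsingleton.elim (e ∘ default) default, Subsingleton.elim (e ∘ default) default] at h

theorem exists_isMaximal_mem_fullRelations_iff {φ : L.Sentence}
    (hφ : Theory.IsSatisfiable ({φ} : L.Theory)) (X : Set (Σ n, L.Relations n)) :
    ∃ T : L.Theory, T.IsMaximal ∧ φ ∈ T ∧
      ∀ p ∉ relationSymbols φ, p ∈ fullRelations T ↔ p ∈ X := by
  obtain ⟨M⟩ := hφ
  have hM : M ⊨ φ := Theory.model_singleton_iff.1 M.is_model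
  exact ⟨L.completeTheory (RelationOverride (relationSymbols φ) X M),
    completeTheory.isMaximal L _, realize_relationOverride_relationSymbols.2 hM,
    fun _ hp => mem_fullRelations_relationOverride hp⟩

theorem infinite_setOf_isMaximal_mem [Infinite (Σ n, L.Relations n)] {φ : L.Sentence}
    (hφ : Theory.IsSatisfiable ({φ} : L.Theory)) :
    {T : L.Theory | T.IsMaximal ∧ φ ∈ T}.Infinite := by
  choose T hmax hmem hfull using fun p => exists_isMaximal_mem_fullRelations_iff hφ {p}
  refine Set.infinite_of_injOn_mapsTo (f := T) (fun p hp q _ hpq => ?_)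
    (fun p _ => ⟨hmax p, hmem p⟩) (finite_relationSymbols φ).infinite_compl
  have hp_full : p ∈ fullRelations (T p) := (hfull p p hp).2 rfl
  exact (hfull q p hp).1 (hpq ▸ hp_full)

end Override

section OneElement

open FirstOrder.Language.Structure

variable {L : FirstOrder.Language} {M N : Type*} [L.Structure M] [L.Structure N]

theorem realize_not_cardGe_two : M ⊨ (∼(Sentence.cardGe L 2) : L.Sentence) ↔ Subsingleton M := by
  rw [Sentence.realize_not, Sentence.realize_cardGe, Nat.cast_ofNat, Cardinal.two_le_iff_one_lt,
    not_lt, Cardinal.le_one_iff_subsingleton]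

theorem isSatisfiable_not_cardGe_two :
    Theory.IsSatisfiable ({∼(Sentence.cardGe L 2)} : L.Theory) := by
  let : L.Structure Unit := Inhabited.trivialStructure L
  have : Unit ⊨ ({∼(Sentence.cardGe L 2)} : L.Theory) :=
    Theory.model_singleton_iff.2 (realize_not_cardGe_two.2 inferInstance)
  exact Theory.Model.isSatisfiable Unit

theorem relMap_iff_mem_fullRelations_of_subsingleton [Subsingleton M] {n : ℕ} (r : L.Relations n)
    (xs : Fin n → M) : RelMap r xs ↔ ⟨n, r⟩ ∈ fullRelations (L.completeTheory M) :=
  mem_fullRelations_completeTheory.trans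
    ⟨fun h => h xs, fun h ys => Subsingleton.elim xs ys ▸ h⟩ |>.symm

theorem elementarilyEquivalent_of_subsingleton [Nonempty M] [Subsingleton M] [Nonempty N]
    [Subsingleton N]
    (h : fullRelations (L.completeTheory M) = fullRelations (L.completeTheory N)) : M ≅[L] N := by
  let e : M ≃[L] N :=
    { toFun := fun _ => Classical.arbitrary N
      invFun := fun _ => Classical.arbitrary M
      left_inv := fun _ => Subsingleton.elim _ _
      right_inv := fun _ => Subsingleton.elim _ _
      map_fun' := fun _ _ => Subsingleton.elim _ _
      map_rel' := fun r _ => by simp only [relMap_iff_mem_fullRelations_of_subsingleton, h] }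
  exact StrongHomClass.elementarilyEquivalent e

theorem injOn_fullRelations_of_not_cardGe_two :
    Set.InjOn fullRelations {T : L.Theory | T.IsMaximal ∧ ∼(Sentence.cardGe L 2) ∈ T} := by
  rintro T ⟨hT, hTone⟩ T' ⟨hT', hTone'⟩ h
  obtain ⟨M⟩ := hT.1
  obtain ⟨N⟩ := hT'.1
  have : Subsingleton M := realize_not_cardGe_two.1 (T.realize_sentence_of_mem hTone)
  have : Subsingleton N := realize_not_cardGe_two.1 (T'.realize_sentence_of_mem hTone')
  rw [← completeTheory_eq_of_isMaximal M hT, ← completeTheory_eq_of_isMaximal N hT'] at h ⊢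
  exact elementarilyEquivalent_of_subsingleton h

theorem finite_setOf_isMaximal_not_cardGe_two_mem [Finite (Σ n, L.Relations n)] :
    {T : L.Theory | T.IsMaximal ∧ ∼(Sentence.cardGe L 2) ∈ T}.Finite :=
  (Set.toFinite _).of_finite_image injOn_fullRelations_of_not_cardGe_two

end OneElement

/-- There is a satisfiable Σ-sentence contained in only finitely many complete Σ-theories iff Σ
has only finitely many relation symbols; in particular, if Σ has infinitely many relation
symbols then every satisfiable Σ-sentence belongs to infinitely many complete Σ-theories. -/
theorem totally_transcendental_sentence_iff (L : FirstOrder.Language) :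
    ((∃ φ : L.Sentence, Theory.IsSatisfiable ({φ} : L.Theory) ∧
        {T : L.Theory | T.IsMaximal ∧ φ ∈ T}.Finite) ↔
      Finite (Σ n : ℕ, L.Relations n)) ∧
    (¬ Finite (Σ n : ℕ, L.Relations n) →
      ∀ φ : L.Sentence, Theory.IsSatisfiable ({φ} : L.Theory) →
        {T : L.Theory | T.IsMaximal ∧ φ ∈ T}.Infinite) := by
  have infinite_extensions (hL : ¬ Finite (Σ n : ℕ, L.Relations n)) (φ : L.Sentence)
      (hφ : Theory.IsSatisfiable ({φ} : L.Theory)) :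
      {T : L.Theory | T.IsMaximal ∧ φ ∈ T}.Infinite :=
    have := not_finite_iff_infinite.1 hL
    infinite_setOf_isMaximal_mem hφ
  refine ⟨⟨fun ⟨φ, hφ, hfin⟩ => ?_, fun _ => ?_⟩, infinite_extensions⟩
  · by_contra hL
    exact infinite_extensions hL φ hφ hfin
  · exact ⟨∼(Sentence.cardGe L 2), isSatisfiable_not_cardGe_two,
      finite_setOf_isMaximal_not_cardGe_two_mem⟩
end

section
/- Let P be a finite nonempty property (a finite set of complete theories of Σ) with exactly n elements. Then for every positive integer k, there exists a Σ-sentence φ with |P_φ| = k if and only if 1 ≤ k ≤ n. That is, the pt-spectrum of P equals {1, 2, …, n}. -/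
open FirstOrder Language

/-!
Two distinct maximal theories `S`, `T` are separated by a sentence `σ S T ∈ S \ T`. Hence for
disjoint finite sets `Q`, `R` of maximal theories, `⋁ S ∈ Q, ⋀ T ∈ R, σ S T` belongs to every
member of `Q` and to no member of `R`. Taking `R = P \ Q`, every subset `Q` of a finite `P`
has the form `P_φ`, and `P` has subsets of every size up to its own.
-/

section MaximalTheories

variable {L : FirstOrder.Language} {S T : L.Theory}

theorem mem_iff_realize_of_isMaximal (hT : T.IsMaximal) (φ : L.Sentence) (M : Type*)
    [L.Structure M] [M ⊨ T] [Nonempty M] : φ ∈ T ↔ M ⊨ φ := by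
  rw [hT.mem_iff_models, hT.isComplete.realize_sentence_iff φ M]

theorem iSup_mem_iff_of_isMaximal {ι : Type*} [Finite ι] (hT : T.IsMaximal)
    (f : ι → L.Sentence) : (Formula.iSup f : L.Sentence) ∈ T ↔ ∃ i, f i ∈ T := by
  obtain ⟨M⟩ := hT.1
  simp only [mem_iff_realize_of_isMaximal hT _ M]
  exact Formula.realize_iSup

theorem iInf_mem_iff_of_isMaximal {ι : Type*} [Finite ι] (hT : T.IsMaximal)
    (f : ι → L.Sentence) : (Formula.iInf f : L.Sentence) ∈ T ↔ ∀ i, f i ∈ T := by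
  obtain ⟨M⟩ := hT.1
  simp only [mem_iff_realize_of_isMaximal hT _ M]
  exact Formula.realize_iInf

theorem eq_of_subset_of_isMaximal (hS : S.IsMaximal) (hT : T.IsSatisfiable) (hST : S ⊆ T) :
    S = T := by
  obtain ⟨M⟩ := hT
  refine hST.antisymm fun φ hφT ↦ (hS.mem_or_not_mem φ).resolve_right fun hφS ↦ ?_
  exact (Sentence.realize_not M).1 (T.realize_sentence_of_mem (hST hφS))
    (T.realize_sentence_of_mem hφT)

theorem exists_mem_notMem_of_isMaximal_of_ne (hS : S.IsMaximal) (hT : T.IsSatisfiable)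
    (hne : S ≠ T) : ∃ φ ∈ S, φ ∉ T :=
  Set.not_subset.1 (mt (eq_of_subset_of_isMaximal hS hT) hne)

theorem exists_sentence_separating_of_disjoint {Q R : Set L.Theory} (hQfin : Q.Finite)
    (hRfin : R.Finite) (hQ : ∀ S ∈ Q, S.IsMaximal) (hR : ∀ T ∈ R, T.IsMaximal)
    (hQR : Disjoint Q R) :
    ∃ φ : L.Sentence, (∀ S ∈ Q, φ ∈ S) ∧ ∀ T ∈ R, φ ∉ T := by
  have := hQfin.to_subtype
  have := hRfin.to_subtype
  have separate (S : Q) (T : R) : ∃ φ ∈ S.1, φ ∉ T.1 :=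
    exists_mem_notMem_of_isMaximal_of_ne (hQ S S.2) (hR T T.2).1 (hQR.ne_of_mem S.2 T.2)
  choose σ hσ_mem hσ_notMem using separate
  refine ⟨Formula.iSup fun S ↦ Formula.iInf (σ S), fun S hS ↦ ?_, fun T hT hφ ↦ ?_⟩
  · exact (iSup_mem_iff_of_isMaximal (hQ S hS) _).2
      ⟨⟨S, hS⟩, (iInf_mem_iff_of_isMaximal (hQ S hS) _).2 (hσ_mem ⟨S, hS⟩)⟩
  · obtain ⟨S, hS⟩ := (iSup_mem_iff_of_isMaximal (hR T hT) _).1 hφ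
    exact hσ_notMem S ⟨T, hT⟩ ((iInf_mem_iff_of_isMaximal (hR T hT) _).1 hS ⟨T, hT⟩)

theorem exists_sentence_sep_mem_eq {P Q : Set L.Theory} (hP : ∀ T ∈ P, T.IsMaximal)
    (hfin : P.Finite) (hQP : Q ⊆ P) : ∃ φ : L.Sentence, {T ∈ P | φ ∈ T} = Q := by
  obtain ⟨φ, hφ_mem, hφ_notMem⟩ := exists_sentence_separating_of_disjoint
    (hfin.subset hQP) hfin.sdiff (fun T hT ↦ hP T (hQP hT)) (fun T hT ↦ hP T hT.1)
    (Set.disjoint_sdiff_right (s := Q) (t := P))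
  refine ⟨φ, Set.Subset.antisymm (fun T ⟨hTP, hφT⟩ ↦ ?_) fun T hTQ ↦ ⟨hQP hTQ, hφ_mem T hTQ⟩⟩
  by_contra hTQ
  exact hφ_notMem T ⟨hTP, hTQ⟩ hφT

end MaximalTheories

/-- For a finite nonempty property `P` with exactly `n` elements, for each positive integer `k`
there is a sentence φ with `|P_φ| = k` iff `1 ≤ k ≤ n`; i.e. the pt-spectrum of `P` is
`{1, …, n}`. -/
theorem ptSpectrum_of_finite {L : FirstOrder.Language} (P : Set L.Theory)
    (hP : ∀ T ∈ P, T.IsMaximal) (hfin : P.Finite) (hne : P.Nonempty)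
    (n : ℕ) (hcard : P.ncard = n) :
    ∀ k : ℕ, 1 ≤ k →
      ((∃ φ : L.Sentence, {T ∈ P | φ ∈ T}.ncard = k) ↔ k ≤ n) := by
  intro k _
  subst hcard
  constructor
  · rintro ⟨φ, rfl⟩
    exact Set.ncard_le_ncard (Set.sep_subset _ _) hfin
  · intro hk
    obtain ⟨Q, hQP, rfl⟩ := Set.exists_subset_card_eq hk
    obtain ⟨φ, hφ⟩ := exists_sentence_sep_mem_eq hP hfin hQP
    exact ⟨φ, congrArg Set.ncard hφ⟩
end

section
/- Let 𝒯 be an infinite property (set of complete theories of Σ) and let T be a complete theory of Σ with T ∉ 𝒯. Then T ∈ Cl_E(𝒯) (i.e., T is an accumulation point of 𝒯 with respect to E-closure) if and only if for every sentence φ ∈ T the set 𝒯_φ = {T' ∈ 𝒯 : φ ∈ T'} is infinite. -/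
open FirstOrder Language

/-- The E-closure of a property `P`: the set of complete theories `T` such that every sentence
of `T` belongs to some theory of `P`. -/
def ClE {L : FirstOrder.Language} (P : Set L.Theory) : Set L.Theory :=
  {T | T.IsMaximal ∧ ∀ φ ∈ T, ∃ T' ∈ P, φ ∈ T'}

/-!
If only finitely many theories of `𝒯` contained `φ ∈ T`, choose for each of them a sentence of `T`
that it lacks. The conjunction of `φ` with these finitely many sentences belongs to `T` but to no
theory of `𝒯`, so `T` is not in the closure.
-/

section

variable {L : FirstOrder.Language} {T T' : L.Theory} {𝒯 : Set L.Theory} {φ ψ : L.Sentence}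

/-- A theory is deductively closed if it contains all its consequences. Consequence is taken
semantically (`⊨ᵇ`), which by Gödel's completeness theorem is the same as provability. -/
def IsDeductivelyClosed (T : L.Theory) : Prop :=
  ∀ φ : L.Sentence, T ⊨ᵇ φ → φ ∈ T

namespace IsDeductivelyClosed

theorem mem_iff_models (hT : IsDeductivelyClosed T) : φ ∈ T ↔ T ⊨ᵇ φ :=
  ⟨Theory.models_sentence_of_mem, hT φ⟩

theorem inf_mem_iff (hT : IsDeductivelyClosed T) : φ ⊓ ψ ∈ T ↔ φ ∈ T ∧ ψ ∈ T := by
  simp only [hT.mem_iff_models, Theory.models_sentence_iff, Sentence.Realize,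
    Formula.realize_inf, forall_and]

theorem iInf_mem_iff {ι : Type*} [Finite ι] {χ : ι → L.Sentence} (hT : IsDeductivelyClosed T) :
    Formula.iInf χ ∈ T ↔ ∀ i, χ i ∈ T := by
  simp only [hT.mem_iff_models, Theory.models_sentence_iff, Sentence.Realize,
    Formula.realize_iInf]
  exact forall_comm

theorem infinite_setOf_mem (hT : IsDeductivelyClosed T)
    (h𝒯 : ∀ T' ∈ 𝒯, IsDeductivelyClosed T') (hsub : ∀ T' ∈ 𝒯, ¬T ⊆ T')
    (hcl : ∀ ψ ∈ T, ∃ T' ∈ 𝒯, ψ ∈ T') (hφ : φ ∈ T) :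
    {T' ∈ 𝒯 | φ ∈ T'}.Infinite := by
  intro hfin
  have : Finite {T' ∈ 𝒯 | φ ∈ T'} := hfin.to_subtype
  have hsep (T' : {T' ∈ 𝒯 | φ ∈ T'}) : ∃ χ ∈ T, χ ∉ T'.1 :=
    Set.not_subset.mp (hsub T' T'.2.1)
  choose χ hχT hχ using hsep
  have hconj : φ ⊓ Formula.iInf χ ∈ T := hT.inf_mem_iff.mpr ⟨hφ, hT.iInf_mem_iff.mpr hχT⟩
  obtain ⟨T', hT'𝒯, hconj'⟩ := hcl _ hconj
  obtain ⟨hφ', hχ'⟩ := (h𝒯 T' hT'𝒯).inf_mem_iff.mp hconj'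
  exact hχ ⟨T', hT'𝒯, hφ'⟩ ((h𝒯 T' hT'𝒯).iInf_mem_iff.mp hχ' _)

end IsDeductivelyClosed

theorem isDeductivelyClosed_of_isMaximal (hT : T.IsMaximal) : IsDeductivelyClosed T :=
  fun _ ↦ hT.mem_of_models

theorem eq_of_isMaximal_of_subset (hT : T.IsMaximal) (hT' : T'.IsSatisfiable) (h : T ⊆ T') :
    T = T' := by
  obtain ⟨M⟩ := hT'
  refine h.antisymm fun φ hφ ↦ (hT.mem_or_not_mem φ).resolve_right fun hnot ↦ ?_
  have hM_not : M ⊨ φ.not := T'.realize_sentence_of_mem (h hnot)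
  exact (Sentence.realize_not M).mp hM_not (T'.realize_sentence_of_mem hφ)

theorem mem_clE_iff_infinite_general (h𝒯 : ∀ T' ∈ 𝒯, IsDeductivelyClosed T')
    (hT : T.IsMaximal) (hsub : ∀ T' ∈ 𝒯, ¬T ⊆ T') :
    T ∈ ClE 𝒯 ↔ ∀ φ ∈ T, {T' ∈ 𝒯 | φ ∈ T'}.Infinite :=
  ⟨fun hcl _ ↦ (isDeductivelyClosed_of_isMaximal hT).infinite_setOf_mem h𝒯 hsub hcl.2,
    fun hinf ↦ ⟨hT, fun φ hφ ↦ (hinf φ hφ).nonempty⟩⟩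

end

/-- For an infinite property 𝒯 and a complete theory T ∉ 𝒯: T ∈ Cl_E(𝒯) (T is an accumulation
point of 𝒯) iff for every sentence φ ∈ T the set 𝒯_φ is infinite. -/
theorem mem_clE_iff_infinite {L : FirstOrder.Language} (𝒯 : Set L.Theory)
    (h𝒯 : ∀ T' ∈ 𝒯, Theory.IsMaximal T') (hinf : 𝒯.Infinite)
    (T : L.Theory) (hT : T.IsMaximal) (hTnotin : T ∉ 𝒯) :
    T ∈ ClE 𝒯 ↔ ∀ φ ∈ T, {T' ∈ 𝒯 | φ ∈ T'}.Infinite := by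
  exact mem_clE_iff_infinite_general (fun T' hT' ↦ isDeductivelyClosed_of_isMaximal (h𝒯 T' hT')) hT
    fun T' hT' h ↦ hTnotin (eq_of_isMaximal_of_subset hT (h𝒯 T' hT').1 h ▸ hT')
end
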